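/- Let d be an odd positive integer and let 𝒟 = {D₁, D₂} be nontrivial partitions of d (neither equal to [d] nor to [1,…,1]) with ν(D₁) + ν(D₂) = d − 1, ν(D₁) ≥ ν(D₂), and D₁ ≠ [2,…,2,1]. Suppose D₁ has at least one part equal to 1. Then D₁ contains a part x > 2, and there exist permutations α ∈ D₁ and β ∈ D₂ of the d-element set such that the cycle type of αβ is [d−2, 1, 1]; moreover there exists a permutation ω with ω² = αβ such that the group ⟨α, β, ω⟩ is transitive. -/

import Mathlib

/-- The cycle type of a permutation, including fixed points as parts equal to `1`. -/
def fullCycleType {Ω : Type*} [Fintype Ω] [DecidableEq Ω] (σ : Equiv.Perm Ω) : Multiset ℕ :=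
  σ.cycleType + Multiset.replicate (Fintype.card Ω - σ.support.card) 1

/-- A multiset of positive integers summing to `d`, i.e. a partition of `d`. -/
def IsPartitionOf (d : ℕ) (D : Multiset ℕ) : Prop :=
  (∀ x ∈ D, 0 < x) ∧ D.sum = d

/-- The defect `ν(D) = Σⱼ (dⱼ − 1)` of a partition. -/
def nu (D : Multiset ℕ) : ℕ := (D.map (· - 1)).sum

/-- The partition `[2,…,2,1]` of an odd number `d`, with `(d−1)/2` parts equal to `2`. -/
def twosAndOne (d : ℕ) : Multiset ℕ := Multiset.replicate ((d - 1) / 2) 2 + {1}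

/-- A subgroup of the symmetric group on `Ω` is transitive. -/
def SubgroupTransitive {Ω : Type*} (G : Subgroup (Equiv.Perm Ω)) : Prop :=
  ∀ x y : Ω, ∃ g ∈ G, g x = y

/-- `Λ` is a block for the subgroup `G` of the symmetric group on `Ω`. -/
def IsBlockOf {Ω : Type*} (G : Subgroup (Equiv.Perm Ω)) (Λ : Set Ω) : Prop :=
  Λ.Nonempty ∧ ∀ g ∈ G, (⇑g '' Λ = Λ ∨ Disjoint (⇑g '' Λ) Λ)

/-- A block is trivial if it is a singleton or the whole set. -/
def TrivialBlock {Ω : Type*} (Λ : Set Ω) : Prop :=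
  (∃ x, Λ = {x}) ∨ Λ = Set.univ

/-- A subgroup of the symmetric group is primitive: transitive with only trivial blocks. -/
def SubgroupPrimitive {Ω : Type*} (G : Subgroup (Equiv.Perm Ω)) : Prop :=
  SubgroupTransitive G ∧ ∀ Λ : Set Ω, IsBlockOf G Λ → TrivialBlock Λ

/-- A subgroup of the symmetric group is imprimitive: transitive but not primitive. -/
def SubgroupImprimitive {Ω : Type*} (G : Subgroup (Equiv.Perm Ω)) : Prop :=
  SubgroupTransitive G ∧ ¬ SubgroupPrimitive G

/-- The orbit of `x` under a subgroup `G` of the symmetric group on `Ω`. -/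
def orbSet {Ω : Type*} (G : Subgroup (Equiv.Perm Ω)) (x : Ω) : Set Ω :=
  {y | ∃ g ∈ G, g x = y}

/-- The number of orbits of a subgroup `G` of the symmetric group on `Ω`. -/
noncomputable def numOrbits {Ω : Type*} (G : Subgroup (Equiv.Perm Ω)) : ℕ :=
  Nat.card (Set.range (orbSet G))


open Equiv Equiv.Perm

section Aux

set_option linter.unusedSectionVars false

variable {T : Type*} [Fintype T] [DecidableEq T]

/-- `σ` has full cycle type `k ::ₘ R`, and the cycle through `x` has length `k`. -/
def HasCyc (σ : Perm T) (x : T) (k : ℕ) (R : Multiset ℕ) : Prop :=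
  orderOf (σ.cycleOf x) = k ∧ fullCycleType σ = k ::ₘ R

theorem cycleOf_pow_eq_one_iff_aux (σ : Perm T) (x : T) (n : ℕ) :
    (σ.cycleOf x) ^ n = 1 ↔ (σ ^ n) x = x := by
  by_cases hx : σ x = x
  · rw [(cycleOf_eq_one_iff σ).2 hx]
    simp [pow_apply_eq_self_of_apply_eq_self hx]
  · rw [(isCycle_cycleOf σ hx).pow_eq_one_iff' (x := x) (by simpa using hx),
      cycleOf_pow_apply_self]

theorem orderOf_cycleOf_congr {S : Type*} [Fintype S] [DecidableEq S] (σ : Perm T) (x : T)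
    (τ : Perm S) (y : S) (h : ∀ n : ℕ, (σ ^ n) x = x ↔ (τ ^ n) y = y) :
    orderOf (σ.cycleOf x) = orderOf (τ.cycleOf y) := by
  rw [orderOf_eq_orderOf_iff]
  intro n
  rw [cycleOf_pow_eq_one_iff_aux, cycleOf_pow_eq_one_iff_aux, h]

theorem fullCycleType_inv (σ : Perm T) : fullCycleType σ⁻¹ = fullCycleType σ := by
  simp [fullCycleType]

theorem HasCyc.inv {σ : Perm T} {x : T} {k : ℕ} {R : Multiset ℕ} (h : HasCyc σ x k R) :
    HasCyc σ⁻¹ x k R := by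
  refine ⟨?_, by rw [fullCycleType_inv, h.2]⟩
  rw [← h.1]
  apply orderOf_cycleOf_congr
  intro n
  rw [inv_pow, Perm.inv_eq_iff_eq, eq_comm]

/-- Attaching a fixed point `y` to the cycle through `x`. -/
theorem HasCyc.attach {σ : Perm T} {x y : T} {k : ℕ} {R : Multiset ℕ}
    (h : HasCyc σ x k (1 ::ₘ R)) (hy : σ y = y) (hxy : x ≠ y) :
    HasCyc (swap y x * σ) y (k + 1) R ∧ HasCyc (swap y x * σ) x (k + 1) R := by
  obtain ⟨hk, hf⟩ := h
  set c := σ.cycleOf x with hc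
  obtain ⟨τ, hστ, hdis⟩ : ∃ τ, σ = c * τ ∧ Disjoint c τ := by
    by_cases hx : σ x = x
    · refine ⟨σ, ?_, ?_⟩ <;> rw [hc, (cycleOf_eq_one_iff σ).2 hx]
      · simp
      · exact disjoint_one_left σ
    · have hm : c ∈ σ.cycleFactorsFinset :=
        cycleOf_mem_cycleFactorsFinset_iff.2 (by simpa using hx)
      have hd := disjoint_mul_inv_of_mem_cycleFactorsFinset hm
      exact ⟨σ * c⁻¹, by rw [← hd.commute.eq]; simp, hd.symm⟩
  obtain ⟨l, hnd, hform, hlen, hsub⟩ : ∃ l : List T, (x :: l).Nodup ∧ (x :: l).formPerm = c ∧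
      (x :: l).length = k ∧ ∀ z ∈ l, σ z ≠ z := by
    by_cases hx : σ x = x
    · have : c = 1 := (cycleOf_eq_one_iff σ).2 hx
      refine ⟨[], by simp, by simp [this], by simp [← hk, this], by simp⟩
    · have hxs : x ∈ σ.support := by simpa using hx
      have hpos := length_toList_pos_of_mem_support σ x hxs
      have h0 : ∀ h : 0 < (toList σ x).length, (toList σ x)[0] = x :=
        fun _ => toList_getElem_zero σ x hxs
      have hfp := formPerm_toList σ x
      have hnd := nodup_toList σ x
      have hln := length_toList σ x
      have hmem : ∀ z ∈ toList σ x, σ z ≠ z := by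
        intro z hz
        rw [mem_toList_iff] at hz
        have := hz.1.mem_support_iff (f := σ)
        simpa using this.1 hz.2
      rw [← (isCycle_cycleOf σ hx).orderOf] at hln
      generalize toList σ x = L at *
      cases L with
      | nil => simp at hpos
      | cons z l =>
        replace h0 := h0 hpos
        simp only [List.getElem_cons_zero] at h0
        subst h0
        exact ⟨l, hnd, hfp, by rw [hln, ← hk], fun w hw => hmem w (by simp [hw])⟩
  have hyl : y ∉ l := fun h => hsub y h hy
  have hnd' : (y :: x :: l).Nodup := by
    rw [List.nodup_cons]; exact ⟨by simp [hyl, hxy.symm], hnd⟩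
  set g := (y :: x :: l).formPerm with hg
  have hgc : g = swap y x * c := by rw [hg, List.formPerm_cons_cons, hform]
  have hgcyc : g.IsCycle := List.isCycle_formPerm hnd' (by simp)
  have hgs : g.support = (y :: x :: l).toFinset :=
    List.support_formPerm_of_nodup _ hnd' (by simp)
  have hgcard : g.support.card = k + 1 := by
    rw [hgs, List.toFinset_card_of_nodup hnd', List.length_cons, hlen]
  have hcx : ∀ z, σ z = z → c z = z := by
    intro z hz
    by_contra hne
    exact (mem_support.1 (support_cycleOf_le σ x (mem_support.2 hne))) hz
  have hτx : τ x = x := by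
    by_cases hx : σ x = x
    · have := hcx x hx
      have h2 : c (τ x) = x := by rw [← Perm.mul_apply, ← hστ, hx]
      exact c.injective (h2.trans this.symm)
    · exact (hdis x).resolve_left (by simpa [hc] using hx)
  have hτy : τ y = y := by
    have := hcx y hy
    have h2 : c (τ y) = y := by rw [← Perm.mul_apply, ← hστ, hy]
    exact c.injective (h2.trans this.symm)
  have hτl : ∀ z ∈ l, τ z = z := by
    intro z hz
    have : c z ≠ z := by
      rw [← hform]
      rw [List.formPerm_apply_mem_ne_self_iff _ hnd z (by simp [hz])]
      have := List.length_pos_of_mem hz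
      simp; omega
    exact (hdis z).resolve_left this
  have hgd : Disjoint g τ := by
    intro z
    by_cases hz : z ∈ y :: x :: l
    · right
      simp only [List.mem_cons] at hz
      rcases hz with rfl | rfl | hz
      exacts [hτy, hτx, hτl z hz]
    · left
      exact List.formPerm_apply_of_notMem hz
  have heq : swap y x * σ = g * τ := by rw [hgc, mul_assoc, ← hστ]
  have hord : ∀ z ∈ y :: x :: l, τ z = z → orderOf ((g * τ).cycleOf z) = k + 1 := by
    intro z hz hz'
    rw [cycleOf_mul_of_apply_right_eq_self hgd.commute z hz', hgcyc.cycleOf_eq, hgcyc.orderOf,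
      hgcard]
    apply mem_support.1
    rw [hgs]; simpa using hz
  have hcle : k + 1 + τ.support.card ≤ Fintype.card T := by
    rw [← hgcard, ← hgd.card_support_mul]; exact Finset.card_le_univ _
  have hfct : fullCycleType (g * τ) = (k + 1) ::ₘ R := by
    have hf2 : fullCycleType σ = c.cycleType + τ.cycleType +
        Multiset.replicate (Fintype.card T - (c.support.card + τ.support.card)) 1 := by
      conv_lhs => rw [hστ]
      rw [fullCycleType, hdis.cycleType_mul, hdis.card_support_mul]
    rw [hf2] at hf
    rw [fullCycleType, hgd.cycleType_mul, hgd.card_support_mul, hgcyc.cycleType, hgcard]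
    obtain ⟨N, hN⟩ := Nat.exists_eq_add_of_le hcle
    rw [hN] at hf ⊢
    by_cases hx : σ x = x
    · have hc1 : c = 1 := (cycleOf_eq_one_iff σ).2 hx
      have hk1 : k = 1 := by rw [← hk, hc1, orderOf_one]
      subst hk1
      have e : 1 + 1 + τ.support.card + N - (c.support.card + τ.support.card) = N + 1 + 1 := by
        rw [hc1]; simp; omega
      rw [e, hc1, cycleType_one, Multiset.replicate_succ, Multiset.replicate_succ, zero_add,
        Multiset.add_cons, Multiset.add_cons, Multiset.cons_inj_right,
        Multiset.cons_inj_right] at hf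
      rw [← hf, add_tsub_cancel_left, add_assoc, Multiset.singleton_add]
    · have hcc : c.IsCycle := isCycle_cycleOf σ hx
      have hck : c.support.card = k := by rw [← hcc.orderOf, hk]
      have e : k + 1 + τ.support.card + N - (c.support.card + τ.support.card) = N + 1 := by
        rw [hck]; omega
      rw [e, hcc.cycleType, hck, Multiset.replicate_succ, Multiset.add_cons, add_assoc,
        Multiset.singleton_add, Multiset.cons_swap, Multiset.cons_inj_right,
        Multiset.cons_inj_right] at hf
      rw [← hf, add_tsub_cancel_left, add_assoc, Multiset.singleton_add]
  rw [heq]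
  exact ⟨⟨hord y (by simp) hτy, hfct⟩, ⟨hord x (by simp) hτx, hfct⟩⟩

/-- Extend by a new fixed point. -/
def up (σ : Perm T) : Perm (Option T) := optionCongr σ

theorem up_mul (σ τ : Perm T) : up (σ * τ) = up σ * up τ := by
  ext1 x; cases x <;> simp [up]

theorem up_some (σ : Perm T) (x : T) : up σ (some x) = some (σ x) := by simp [up]

theorem up_none (σ : Perm T) : up σ none = none := by simp [up]

theorem up_pow (σ : Perm T) (n : ℕ) : up σ ^ n = up (σ ^ n) := by
  induction n with
  | zero => ext1 x; cases x <;> simp [up]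
  | succ n ih => rw [pow_succ, pow_succ, up_mul, ih]

theorem fullCycleType_up (σ : Perm T) : fullCycleType (up σ) = 1 ::ₘ fullCycleType σ := by
  have he : up σ = σ.extendDomain (Equiv.optionIsSomeEquiv T).symm := by
    ext1 x
    cases x with
    | none => rw [up_none, extendDomain_apply_not_subtype]; simp
    | some x =>
      rw [up_some]
      exact (extendDomain_apply_image σ (Equiv.optionIsSomeEquiv T).symm x).symm
  unfold fullCycleType
  rw [he, cycleType_extendDomain, card_support_extend_domain, Fintype.card_option,
    Nat.sub_add_comm (Finset.card_le_univ _), Multiset.replicate_succ, Multiset.add_cons]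

theorem HasCyc.up_some {σ : Perm T} {x : T} {k : ℕ} {R : Multiset ℕ} (h : HasCyc σ x k R) :
    HasCyc (up σ) (some x) k (1 ::ₘ R) := by
  refine ⟨?_, by rw [fullCycleType_up, h.2, Multiset.cons_swap]⟩
  rw [← h.1]
  apply orderOf_cycleOf_congr
  intro n
  rw [up_pow, _root_.up_some, Option.some_inj]

theorem HasCyc.up_none {σ : Perm T} {x : T} {k : ℕ} {R : Multiset ℕ} (h : HasCyc σ x k R) :
    HasCyc (up σ) none 1 (k ::ₘ R) := by
  refine ⟨?_, by rw [fullCycleType_up, h.2]⟩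
  rw [(cycleOf_eq_one_iff _).2 (_root_.up_none σ), orderOf_one]

end Aux

/-- Existence of a bicoloured plane tree with prescribed degrees, in terms of permutations:
there are permutations with cycle types `a ::ₘ A` and `b ::ₘ B` whose product is a cycle of
full length `m`, and the cycles of lengths `a` and `b` meet in a point `x`. -/
def TreeP (m a : ℕ) (A : Multiset ℕ) (b : ℕ) (B : Multiset ℕ) : Prop :=
  ∃ (T : Type) (_ : Fintype T) (_ : DecidableEq T) (α β : Perm T) (x : T),
    Fintype.card T = m ∧ HasCyc α x a A ∧ HasCyc β x b B ∧ HasCyc (α * β) x m 0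

theorem TreeP.symm {m a b : ℕ} {A B : Multiset ℕ} (h : TreeP m a A b B) : TreeP m b B a A := by
  obtain ⟨T, _, _, α, β, x, hc, h1, h2, h3⟩ := h
  refine ⟨T, inferInstance, inferInstance, β⁻¹, α⁻¹, x, hc, h2.inv, h1.inv, ?_⟩
  rw [← mul_inv_rev]
  exact h3.inv

theorem TreeP.step1 {m a b : ℕ} {A B : Multiset ℕ} (h : TreeP m a A b B) :
    TreeP (m + 1) (a + 1) A b (1 ::ₘ B) := by
  obtain ⟨T, _, _, α, β, x, hc, h1, h2, h3⟩ := h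
  refine ⟨Option T, inferInstance, inferInstance, swap none (some x) * up α, up β, some x,
    by simp [hc], (h1.up_some.attach (up_none α) (by simp)).2, h2.up_some, ?_⟩
  rw [mul_assoc, ← up_mul]
  exact (h3.up_some.attach (up_none _) (by simp)).2

theorem TreeP.step2 {m a b : ℕ} {A B : Multiset ℕ} (h : TreeP m a A b B) :
    TreeP (m + 1) (a + 1) A 1 (b ::ₘ B) := by
  obtain ⟨T, _, _, α, β, x, hc, h1, h2, h3⟩ := h
  refine ⟨Option T, inferInstance, inferInstance, swap none (some x) * up α, up β, none,
    by simp [hc], (h1.up_some.attach (up_none α) (by simp)).1, h2.up_none, ?_⟩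
  rw [mul_assoc, ← up_mul]
  exact (h3.up_some.attach (up_none _) (by simp)).1

theorem TreeP.base : TreeP 1 1 0 1 0 := by
  have h : HasCyc (1 : Perm (Fin 1)) 0 1 0 := by
    refine ⟨?_, ?_⟩
    · rw [cycleOf_one, orderOf_one]
    · simp [fullCycleType]
  exact ⟨Fin 1, inferInstance, inferInstance, 1, 1, 0, by simp, h, h, by simpa using h⟩

theorem card_le_sum_of_pos (A : Multiset ℕ) (h : ∀ x ∈ A, 0 < x) : A.card ≤ A.sum := by
  have := Multiset.card_nsmul_le_sum (s := A) (a := 1) (fun x hx => h x hx)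
  simpa using this

theorem two_card_le_sum (A : Multiset ℕ) (h : ∀ x ∈ A, 2 ≤ x) : A.card * 2 ≤ A.sum := by
  have := Multiset.card_nsmul_le_sum (s := A) (a := 2) (fun x hx => h x hx)
  simpa using this

theorem sum_le_card (A : Multiset ℕ) (h : ∀ x ∈ A, x ≤ 1) : A.sum ≤ A.card := by
  have := Multiset.sum_le_card_nsmul A 1 (fun x hx => h x hx)
  simpa using this

theorem treeP_exists (m : ℕ) : ∀ (a b : ℕ) (A B : Multiset ℕ), 0 < a → 0 < b →
    (∀ x ∈ A, 0 < x) → (∀ x ∈ B, 0 < x) → a + A.sum = m → b + B.sum = m →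
    A.card + B.card + 1 = m → (2 ≤ a ∨ 2 ≤ b ∨ m = 1) → TreeP m a A b B := by
  induction m with
  | zero => intros; omega
  | succ m ih =>
    -- the case where the first colour has degree at least two and the second has a leaf
    have key1 : ∀ (a b : ℕ) (A B : Multiset ℕ), 2 ≤ a → 2 ≤ b →
        (∀ x ∈ A, 0 < x) → (∀ x ∈ B, 0 < x) → a + A.sum = m + 1 → b + B.sum = m + 1 →
        A.card + B.card + 1 = m + 1 → 1 ∈ B → TreeP (m + 1) a A b B := by
      intro a b A B ha hb hA hB hsA hsB hcard h1
      obtain ⟨B', rfl⟩ := Multiset.exists_cons_of_mem h1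
      simp only [Multiset.sum_cons, Multiset.card_cons] at hsB hcard
      obtain ⟨a, rfl⟩ : ∃ a', a = a' + 1 := ⟨a - 1, by omega⟩
      refine (ih a b A B' (by omega) (by omega) hA (fun x hx => hB x (by simp [hx])) (by omega)
        (by omega) (by omega) (by omega)).step1
    have key2 : ∀ (a : ℕ) (A B : Multiset ℕ), 2 ≤ a →
        (∀ x ∈ A, 0 < x) → (∀ x ∈ B, 0 < x) → a + A.sum = m + 1 → 1 + B.sum = m + 1 →
        A.card + B.card + 1 = m + 1 → TreeP (m + 1) a A 1 B := by
      intro a A B ha hA hB hsA hsB hcard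
      obtain ⟨a, rfl⟩ : ∃ a', a = a' + 1 := ⟨a - 1, by omega⟩
      obtain ⟨b, hb, hcond⟩ : ∃ b ∈ B, 2 ≤ a ∨ 2 ≤ b ∨ m = 1 := by
        by_cases h : ∃ b ∈ B, 2 ≤ b
        · obtain ⟨b, hb, h2⟩ := h
          exact ⟨b, hb, Or.inr (Or.inl h2)⟩
        · push Not at h
          have hle := sum_le_card B (fun x hx => by have := h x hx; omega)
          have hA0 : A = 0 := Multiset.card_eq_zero.1 (by omega)
          subst hA0
          have hB0 : B ≠ 0 := by
            rintro rfl
            simp at hsA hsB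
            omega
          obtain ⟨b, hb⟩ := Multiset.exists_mem_of_ne_zero hB0
          refine ⟨b, hb, ?_⟩
          simp at hsA
          omega
      obtain ⟨B', rfl⟩ := Multiset.exists_cons_of_mem hb
      simp only [Multiset.sum_cons, Multiset.card_cons] at hsB hcard
      exact (ih a b A B' (by omega) (hB b hb) hA (fun x hx => hB x (by simp [hx])) (by omega)
        (by omega) (by omega) hcond).step2
    intro a b A B ha hb hA hB hsA hsB hcard hcond
    by_cases hm : m = 0
    · subst hm
      have hA0 : A = 0 := Multiset.card_eq_zero.1 (by omega)
      have hB0 : B = 0 := Multiset.card_eq_zero.1 (by omega)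
      subst hA0 hB0
      simp at hsA hsB
      subst hsA hsB
      exact TreeP.base
    by_cases hb1 : b = 1
    · subst hb1
      exact key2 a A B (by omega) hA hB hsA hsB hcard
    by_cases ha1 : a = 1
    · subst ha1
      exact (key2 b B A (by omega) hB hA hsB hsA (by omega)).symm
    by_cases h1 : 1 ∈ B
    · exact key1 a b A B (by omega) (by omega) hA hB hsA hsB hcard h1
    by_cases h2 : 1 ∈ A
    · exact (key1 b a B A (by omega) (by omega) hB hA hsB hsA (by omega) h2).symm
    exfalso
    have e1 := two_card_le_sum A (fun x hx => by
      have := hA x hx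
      have : x ≠ 1 := fun h => h2 (h ▸ hx)
      omega)
    have e2 := two_card_le_sum B (fun x hx => by
      have := hB x hx
      have : x ≠ 1 := fun h => h1 (h ▸ hx)
      omega)
    omega

theorem up_inv {T : Type*} (σ : Perm T) : up σ⁻¹ = (up σ)⁻¹ := by
  rw [eq_inv_iff_mul_eq_one]
  ext1 x
  cases x <;> simp [up]

theorem HasCyc.attach_right {T : Type*} [Fintype T] [DecidableEq T] {σ : Perm T} {x y : T}
    {k : ℕ} {R : Multiset ℕ} (h : HasCyc σ x k (1 ::ₘ R)) (hy : σ y = y) (hxy : x ≠ y) :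
    HasCyc (σ * swap y x) y (k + 1) R := by
  have := (h.inv.attach (y := y) (by rw [Perm.inv_eq_iff_eq, hy]) hxy).1.inv
  simpa using this

theorem HasCyc.sameCycle {T : Type*} [Fintype T] [DecidableEq T] {σ : Perm T} {x : T} {m : ℕ}
    {R : Multiset ℕ} (h : HasCyc σ x m R) (hc : Fintype.card T = m) (z : T) :
    SameCycle σ x z := by
  by_cases hx : σ x = x
  · have h1 := h.1
    rw [(cycleOf_eq_one_iff σ).2 hx, orderOf_one] at h1
    have : Subsingleton T := Fintype.card_le_one_iff_subsingleton.1 (by omega)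
    rw [Subsingleton.elim z x]
  · have h1 := h.1
    rw [(isCycle_cycleOf σ hx).orderOf, ← hc, Finset.card_eq_iff_eq_univ] at h1
    have : z ∈ (σ.cycleOf x).support := by rw [h1]; simp
    exact (mem_support_cycleOf_iff.1 this).1

theorem HasCyc.pow_eq_one {T : Type*} [Fintype T] [DecidableEq T] {σ : Perm T} {x : T} {m : ℕ}
    {R : Multiset ℕ} (h : HasCyc σ x m R) (hc : Fintype.card T = m) : σ ^ m = 1 := by
  ext z
  obtain ⟨i, rfl⟩ := h.sameCycle hc z
  have hx : (σ ^ m) x = x := by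
    rw [← cycleOf_pow_eq_one_iff_aux, ← h.1, pow_orderOf_eq_one]
  rw [← Perm.mul_apply, ((Commute.refl σ).pow_left m |>.zpow_right i).eq, Perm.mul_apply, hx]
  rfl

theorem fullCycleType_permCongr {S T : Type*} [Fintype S] [DecidableEq S] [Fintype T]
    [DecidableEq T] (e : S ≃ T) (σ : Perm S) :
    fullCycleType (e.permCongr σ) = fullCycleType σ := by
  let f : S ≃ {_x : T // True} := e.trans (Equiv.subtypeUnivEquiv (fun _ => trivial)).symm
  have he : e.permCongr σ = σ.extendDomain f := by
    ext1 y
    obtain ⟨s, rfl⟩ := e.surjective y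
    have := extendDomain_apply_image σ f s
    rw [Equiv.permCongr_apply, Equiv.symm_apply_apply]
    exact this.symm
  unfold fullCycleType
  rw [he, cycleType_extendDomain, card_support_extend_domain, Fintype.card_congr e]

/-- The construction on an auxiliary type. -/
theorem exists_on_option {m a b : ℕ} {A B : Multiset ℕ} (hm : Odd m) (h : TreeP m a A b B) :
    ∃ (S : Type) (_ : Fintype S) (_ : DecidableEq S) (α β ω : Perm S),
      Fintype.card S = m + 2 ∧
      fullCycleType α = 1 ::ₘ (a + 1) ::ₘ A ∧ fullCycleType β = 1 ::ₘ (b + 1) ::ₘ B ∧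
      fullCycleType (α * β) = {m, 1, 1} ∧ ω ^ 2 = α * β ∧
      SubgroupTransitive (Subgroup.closure {α, β, ω}) := by
  obtain ⟨T, _, _, α, β, x, hc, h1, h2, h3⟩ := h
  set γ := α * β with hγ
  obtain ⟨k, hk⟩ := hm
  have hγm := h3.pow_eq_one hc
  have h1' := h1.up_some.attach_right (up_none α) (by simp)
  have h2' := (h2.up_some.attach (up_none β) (by simp)).1
  set α₁ := up α * swap none (some x) with hα₁
  set β₁ := swap none (some x) * up β with hβ₁
  have hprod : α₁ * β₁ = up γ := by
    rw [hα₁, hβ₁, mul_assoc, ← mul_assoc (swap _ _), swap_mul_self, one_mul, ← up_mul]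
  have hprod2 : up α₁ * up β₁ = up (up γ) := by rw [← up_mul, hprod]
  let ω : Perm (Option (Option T)) := up (up (γ ^ (k + 1))) * swap none (some none)
  have hω : ω ^ 2 = up α₁ * up β₁ := by
    rw [hprod2, pow_two]
    ext1 z
    rcases z with _ | _ | z
    · simp [ω, up]
    · simp [ω, up]
    · have hs : swap (none : Option (Option T)) (some none) (some (some z)) = some (some z) :=
        swap_apply_of_ne_of_ne (by simp) (by simp)
      have hs' : swap (none : Option (Option T)) (some none)
          (some (some ((γ ^ (k + 1)) z))) = some (some ((γ ^ (k + 1)) z)) :=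
        swap_apply_of_ne_of_ne (by simp) (by simp)
      have : γ ^ (k + 1) * γ ^ (k + 1) = γ := by
        rw [← pow_add, show k + 1 + (k + 1) = m + 1 by omega, pow_succ, hγm, one_mul]
      simp only [ω, Perm.mul_apply, hs, up_some, hs']
      rw [← Perm.mul_apply, this]
  refine ⟨Option (Option T), inferInstance, inferInstance, up α₁, up β₁, ω, by simp [hc], ?_, ?_,
    ?_, hω, ?_⟩
  · rw [fullCycleType_up, h1'.2]
  · rw [fullCycleType_up, h2'.2]
  · rw [hprod2, fullCycleType_up, fullCycleType_up, h3.2]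
    change _ = m ::ₘ 1 ::ₘ 1 ::ₘ 0
    rw [Multiset.cons_swap m 1, Multiset.cons_swap m 1]
  · set G := Subgroup.closure {up α₁, up β₁, ω} with hG
    have hα : up α₁ ∈ G := Subgroup.subset_closure (by simp)
    have hβ : up β₁ ∈ G := Subgroup.subset_closure (by simp)
    have hω' : ω ∈ G := Subgroup.subset_closure (by simp)
    have hγG : up (up γ) ∈ G := hprod2 ▸ G.mul_mem hα hβ
    have hβp : (up β₁) (some none) = some (some x) := by
      rw [up_some, hβ₁, Perm.mul_apply, up_none, swap_apply_left]
    have hβp' : (up β₁)⁻¹ (some (some x)) = some none := by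
      rw [Perm.inv_eq_iff_eq, hβp]
    have reach : ∀ z, ∃ g ∈ G, g (some (some x)) = z := by
      intro z
      rcases z with _ | _ | z
      · refine ⟨ω * (up β₁)⁻¹, G.mul_mem hω' (G.inv_mem hβ), ?_⟩
        rw [Perm.mul_apply, hβp']
        simp [ω, up]
      · exact ⟨(up β₁)⁻¹, G.inv_mem hβ, hβp'⟩
      · obtain ⟨i, hi⟩ := (h3.sameCycle hc z).exists_nat_pow_eq
        refine ⟨up (up γ) ^ i, G.pow_mem hγG i, ?_⟩
        rw [up_pow, up_pow, up_some, up_some, hi]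
    intro y z
    obtain ⟨g, hg, rfl⟩ := reach y
    obtain ⟨g', hg', rfl⟩ := reach z
    exact ⟨g' * g⁻¹, G.mul_mem hg' (G.inv_mem hg), by simp⟩

theorem nu_add_card (D : Multiset ℕ) (h : ∀ x ∈ D, 0 < x) : nu D + D.card = D.sum := by
  induction D using Multiset.induction_on with
  | empty => simp [nu]
  | cons a s ih =>
    have h1 := ih (fun x hx => h x (by simp [hx]))
    have h2 := h a (by simp)
    simp only [nu, Multiset.map_cons, Multiset.sum_cons, Multiset.card_cons] at h1 ⊢
    omega

/-- If `D₁` has a part equal to 1, then `D₁` has a part `x > 2`, and there are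
`α ∈ D₁`, `β ∈ D₂` with `αβ` of cycle type `[d−2, 1, 1]`, and an `ω` with `ω² = αβ` such
that `⟨α, β, ω⟩` is transitive. -/
theorem statement_5 {Ω : Type*} [Fintype Ω] [DecidableEq Ω] (d : ℕ)
    (hcard : Fintype.card Ω = d) (hd : Odd d) (hdpos : 0 < d)
    (D₁ D₂ : Multiset ℕ) (hP1 : IsPartitionOf d D₁) (hP2 : IsPartitionOf d D₂)
    (hnt1 : D₁ ≠ {d} ∧ D₁ ≠ Multiset.replicate d 1)
    (hnt2 : D₂ ≠ {d} ∧ D₂ ≠ Multiset.replicate d 1)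
    (hsum : nu D₁ + nu D₂ = d - 1) (hord : nu D₂ ≤ nu D₁)
    (hne : D₁ ≠ twosAndOne d)
    (h1 : (1 : ℕ) ∈ D₁) :
    (∃ x ∈ D₁, 2 < x) ∧
    ∃ α β : Equiv.Perm Ω, fullCycleType α = D₁ ∧ fullCycleType β = D₂ ∧
      fullCycleType (α * β) = ({d - 2, 1, 1} : Multiset ℕ) ∧
      ∃ ω : Equiv.Perm Ω, ω ^ 2 = α * β ∧
        SubgroupTransitive (Subgroup.closure {α, β, ω}) := by
  obtain ⟨hpos1, hsum1⟩ := hP1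
  obtain ⟨hpos2, hsum2⟩ := hP2
  have hn1 := nu_add_card D₁ hpos1
  have hn2 := nu_add_card D₂ hpos2
  obtain ⟨r, hr⟩ := hd
  have hbig : ∃ x ∈ D₁, 2 < x := by
    by_contra hcon
    push Not at hcon
    obtain ⟨E, rfl⟩ := Multiset.exists_cons_of_mem h1
    simp only [Multiset.sum_cons, Multiset.card_cons] at hsum1 hn1
    have hE := Multiset.sum_le_card_nsmul E 2 (fun x hx => hcon x (by simp [hx]))
    rw [smul_eq_mul] at hE
    apply hne
    have hEr : E = Multiset.replicate r 2 := by
      rw [Multiset.eq_replicate]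
      refine ⟨by omega, fun x hx => ?_⟩
      have hx2 := hcon x (by simp [hx])
      by_contra hx2'
      obtain ⟨F, rfl⟩ := Multiset.exists_cons_of_mem hx
      have hF := Multiset.sum_le_card_nsmul F 2 (fun x hx => hcon x (by simp [hx]))
      rw [smul_eq_mul] at hF
      simp only [Multiset.sum_cons, Multiset.card_cons] at *
      omega
    rw [twosAndOne, hEr, show (d - 1) / 2 = r by omega, add_comm, Multiset.singleton_add]
  refine ⟨hbig, ?_⟩
  obtain ⟨a, ha, ha2⟩ := hbig
  have h1' : 1 ∈ D₂ := by
    by_contra hcon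
    have := two_card_le_sum D₂ (fun x hx => by
      have := hpos2 x hx
      have : x ≠ 1 := fun h => hcon (h ▸ hx)
      omega)
    omega
  obtain ⟨b, hb, hb2⟩ : ∃ b ∈ D₂, 1 < b := by
    by_contra hcon
    push Not at hcon
    have hall : ∀ x ∈ D₂, x = 1 := fun x hx => le_antisymm (hcon x hx) (hpos2 x hx)
    have hle := sum_le_card D₂ hcon
    have hge := card_le_sum_of_pos D₂ hpos2
    exact hnt2.2 (Multiset.eq_replicate.2 ⟨by omega, hall⟩)
  obtain ⟨A', rfl⟩ := Multiset.exists_cons_of_mem h1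
  obtain ⟨B', rfl⟩ := Multiset.exists_cons_of_mem h1'
  have ha' : a ∈ A' := by
    rcases Multiset.mem_cons.1 ha with h | h
    · omega
    · exact h
  have hb' : b ∈ B' := by
    rcases Multiset.mem_cons.1 hb with h | h
    · omega
    · exact h
  obtain ⟨A, rfl⟩ := Multiset.exists_cons_of_mem ha'
  obtain ⟨B, rfl⟩ := Multiset.exists_cons_of_mem hb'
  obtain ⟨a, rfl⟩ : ∃ a', a = a' + 1 := ⟨a - 1, by omega⟩
  obtain ⟨b, rfl⟩ : ∃ b', b = b' + 1 := ⟨b - 1, by omega⟩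
  simp only [Multiset.sum_cons, Multiset.card_cons] at hsum1 hn1 hsum2 hn2
  have htree : TreeP (d - 2) a A b B :=
    treeP_exists (d - 2) a b A B (by omega) (by omega) (fun x hx => hpos1 x (by simp [hx]))
      (fun x hx => hpos2 x (by simp [hx])) (by omega) (by omega) (by omega) (by omega)
  obtain ⟨S, _, _, α, β, ω, hS, hα, hβ, hαβ, hω, htr⟩ :=
    exists_on_option (⟨r - 1, by omega⟩ : Odd (d - 2)) htree
  have hcS : Fintype.card S = Fintype.card Ω := by omega
  let e : S ≃ Ω := Fintype.equivOfCardEq hcS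
  let φ : Perm S →* Perm Ω := e.permCongrHom.toMonoidHom
  have hφ : ∀ σ, φ σ = e.permCongr σ := fun σ => rfl
  refine ⟨φ α, φ β, ?_, ?_, ?_, φ ω, ?_, ?_⟩
  · rw [hφ, fullCycleType_permCongr, hα]
  · rw [hφ, fullCycleType_permCongr, hβ]
  · rw [← map_mul, hφ, fullCycleType_permCongr, hαβ]
  · rw [← map_pow, hω, map_mul]
  · intro y z
    obtain ⟨g, hg, hgy⟩ := htr (e.symm y) (e.symm z)
    refine ⟨φ g, ?_, ?_⟩
    · have := Subgroup.mem_map_of_mem φ hg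
      rw [MonoidHom.map_closure] at this
      simpa [Set.image_insert_eq] using this
    · rw [hφ, Equiv.permCongr_apply, hgy, Equiv.apply_symm_apply]
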